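/- Let X be a uniformly convex real Banach space, let r be a Helly sequence for X, let k ≥ 1, let α ∈ (0,1], and set β = 1 − (1−α)^{1/k}. Let K_1, …, K_n be convex subsets of X with n ≥ k. If for at least α·(n choose k) of the k-element subsets J ⊆ {1,…,n} the intersection ⋂_{j∈J} K_j contains a point of the closed unit ball of X, then there exists x ∈ X such that dist(x, K_i) ≤ r_k holds for at least β·n of the indices i ∈ {1,…,n}. -/

import Mathlib

open scoped Classical

noncomputable section

/-- `y` is quasi-orthogonal to `x`: some nonzero continuous linear functional attains
its norm on `x` and vanishes on `y`. -/
def QuasiOrth {X : Type*} [NormedAddCommGroup X] [NormedSpace ℝ X] (y x : X) : Prop :=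
  ∃ f : X →L[ℝ] ℝ, f ≠ 0 ∧ f x = ‖f‖ * ‖x‖ ∧ f y = 0

/-- `ζ_X(ε) = inf {‖x + ε y‖ : ‖x‖ = ‖y‖ = 1, y ⌐ x}`. -/
def zetaConv (X : Type*) [NormedAddCommGroup X] [NormedSpace ℝ X] (ε : ℝ) : ℝ :=
  sInf {t : ℝ | ∃ x y : X, ‖x‖ = 1 ∧ ‖y‖ = 1 ∧ QuasiOrth y x ∧ t = ‖x + ε • y‖}

/-- `ζ⁺_X(ε) = sup {‖x + ε y‖ : ‖x‖ = ‖y‖ = 1, y ⌐ x}`. -/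
def zetaSmooth (X : Type*) [NormedAddCommGroup X] [NormedSpace ℝ X] (ε : ℝ) : ℝ :=
  sSup {t : ℝ | ∃ x y : X, ‖x‖ = 1 ∧ ‖y‖ = 1 ∧ QuasiOrth y x ∧ t = ‖x + ε • y‖}

/-- The modulus of convexity `δ_X(ε)`. -/
def modConv (X : Type*) [NormedAddCommGroup X] [NormedSpace ℝ X] (ε : ℝ) : ℝ :=
  sInf {t : ℝ | ∃ x y : X, ‖x‖ ≤ 1 ∧ ‖y‖ ≤ 1 ∧ ε ≤ ‖x - y‖ ∧ t = 1 - ‖x + y‖ / 2}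

/-- The modulus of smoothness `ρ_X(τ)`. -/
def modSmooth (X : Type*) [NormedAddCommGroup X] [NormedSpace ℝ X] (τ : ℝ) : ℝ :=
  sSup {t : ℝ | ∃ x y : X, ‖x‖ = 1 ∧ ‖y‖ = τ ∧ t = (‖x + y‖ + ‖x - y‖) / 2 - 1}

/-- `X` is uniformly convex: the modulus of convexity is positive on `(0, 2]`. -/
def UnifConvex (X : Type*) [NormedAddCommGroup X] [NormedSpace ℝ X] : Prop :=
  ∀ ε ∈ Set.Ioc (0 : ℝ) 2, 0 < modConv X ε

/-- `X` is uniformly smooth: `ρ_X(τ)/τ → 0` as `τ → 0⁺`. -/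
def UnifSmooth (X : Type*) [NormedAddCommGroup X] [NormedSpace ℝ X] : Prop :=
  Filter.Tendsto (fun τ => modSmooth X τ / τ) (nhdsWithin 0 (Set.Ioi 0)) (nhds 0)

/-- A Helly sequence for `X`: `r : {1,2,…} → (0,1]` with `r 1 = 1` and
`r (j+1) * ζ_X (r (j+1)) = r j` for all `j ≥ 1`. -/
def IsHellySeq (X : Type*) [NormedAddCommGroup X] [NormedSpace ℝ X] (r : ℕ → ℝ) : Prop :=
  (∀ j : ℕ, 1 ≤ j → r j ∈ Set.Ioc (0 : ℝ) 1) ∧ r 1 = 1 ∧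
    ∀ j : ℕ, 1 ≤ j → r (j + 1) * zetaConv X (r (j + 1)) = r j

end

/-!
Close the sets `K i`, write `C S` for the intersection of the `K i`, `i ∈ S`, and fix `ρ = r k`.
Suppose `C S`, with `#S = j`, contains only points of norm greater than `ρ / r j`. Let `x` be its
point of minimal norm; a functional supporting the ball at `x` shows that `z - x` is, up to a shift
away from the ball, quasi-orthogonal to `x` for each `z ∈ C S`. Hence if `K i` is farther than `ρ`
from `x`, every `z ∈ C (insert i S)` has norm at least `‖x‖ * ζ (ρ / ‖x‖)`, which the recursion for
`r` shows to be greater than `ρ / r (j + 1)`. After `k` such steps the norm exceeds `ρ / r k = 1`.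

If every point of `X` is farther than `ρ` from at least a `γ` proportion of the sets, each step can
be made in that proportion of ways, and double counting gives `γ ^ k * n.choose k` sets of `k`
indices whose intersection misses the unit ball. Thus `γ ^ k ≤ 1 - α`, that is, `γ ≤ 1 - β`.
-/

section QuasiOrthogonality

variable {X : Type*} [NormedAddCommGroup X] [NormedSpace ℝ X]

lemma QuasiOrth.smul_left {x y : X} (h : QuasiOrth y x) (c : ℝ) : QuasiOrth (c • y) x := by
  obtain ⟨f, hf, hfx, hfy⟩ := h
  exact ⟨f, hf, hfx, by simp [hfy]⟩

lemma QuasiOrth.smul_right {x y : X} (h : QuasiOrth y x) {c : ℝ} (hc : 0 ≤ c) :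
    QuasiOrth y (c • x) := by
  obtain ⟨f, hf, hfx, hfy⟩ := h
  refine ⟨f, hf, ?_, hfy⟩
  rw [map_smul, hfx, norm_smul_of_nonneg hc, smul_eq_mul, mul_left_comm]

lemma QuasiOrth.norm_le_norm_add {x y : X} (h : QuasiOrth y x) : ‖x‖ ≤ ‖x + y‖ := by
  obtain ⟨f, hf, hfx, hfy⟩ := h
  refine le_of_mul_le_mul_left ?_ (norm_pos_iff.2 hf)
  calc ‖f‖ * ‖x‖ = f (x + y) := by rw [map_add, hfx, hfy, add_zero]
    _ ≤ ‖f‖ * ‖x + y‖ := (le_abs_self _).trans (f.le_opNorm _)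

lemma QuasiOrth.norm_add_smul_le {x y : X} (h : QuasiOrth y x) {s t : ℝ} (hs : 0 ≤ s)
    (hst : s ≤ t) : ‖x + s • y‖ ≤ ‖x + t • y‖ := by
  rcases hs.eq_or_lt with rfl | hs
  · simpa using (h.smul_left t).norm_le_norm_add
  rcases hst.eq_or_lt with rfl | hst
  · rfl
  have hconv : ConvexOn ℝ Set.univ fun u : ℝ => ‖x + u • y‖ := by
    simpa [Function.comp_def, AffineMap.lineMap_apply, add_comm] using
      convexOn_univ_norm.comp_affineMap (AffineMap.lineMap (k := ℝ) x (x + y))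
  refine hconv.le_right_of_left_le'' (Set.mem_univ 0) (Set.mem_univ t) hs hst.le ?_
  simpa using (h.smul_left s).norm_le_norm_add

lemma zetaConv_le {x y : X} (hx : ‖x‖ = 1) (hy : ‖y‖ = 1) (h : QuasiOrth y x) (ε : ℝ) :
    zetaConv X ε ≤ ‖x + ε • y‖ := by
  refine csInf_le ⟨0, ?_⟩ ⟨x, y, hx, hy, h, rfl⟩
  rintro _ ⟨x, y, -, -, -, rfl⟩
  exact norm_nonneg _

lemma zetaConv_eq_zero (h : ¬∃ x y : X, ‖x‖ = 1 ∧ ‖y‖ = 1 ∧ QuasiOrth y x) (ε : ℝ) :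
    zetaConv X ε = 0 := by
  rw [zetaConv, Set.eq_empty_of_forall_notMem (s := {t | _}) ?_, Real.sInf_empty]
  rintro _ ⟨x, y, hx, hy, hxy, -⟩
  exact h ⟨x, y, hx, hy, hxy⟩

-- A space without quasi-orthogonal unit vectors has `zetaConv X ε = sInf ∅ = 0`.
lemma one_le_zetaConv_of_ne_zero {δ : ℝ} (h : zetaConv X δ ≠ 0) (ε : ℝ) : 1 ≤ zetaConv X ε := by
  obtain ⟨x, y, hx, hy, hxy⟩ := not_imp_comm.1 (zetaConv_eq_zero · δ) h
  refine le_csInf ⟨_, x, y, hx, hy, hxy, rfl⟩ ?_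
  rintro _ ⟨x, y, hx, -, hxy, rfl⟩
  exact hx ▸ (hxy.smul_left ε).norm_le_norm_add

lemma zetaConv_zero_le_one : zetaConv X 0 ≤ 1 := by
  by_cases h : ∃ x y : X, ‖x‖ = 1 ∧ ‖y‖ = 1 ∧ QuasiOrth y x
  · obtain ⟨x, y, hx, hy, hxy⟩ := h
    simpa [hx] using zetaConv_le hx hy hxy 0
  · exact (zetaConv_eq_zero h 0).trans_le zero_le_one

lemma zetaConv_le_zetaConv_add {s t c : ℝ} (hc : 0 ≤ c)
    (h : ∀ x y : X, ‖x‖ = 1 → ‖y‖ = 1 → QuasiOrth y x → ‖x + s • y‖ ≤ ‖x + t • y‖ + c) :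
    zetaConv X s ≤ zetaConv X t + c := by
  by_cases hpair : ∃ x y : X, ‖x‖ = 1 ∧ ‖y‖ = 1 ∧ QuasiOrth y x
  · obtain ⟨x, y, hx, hy, hxy⟩ := hpair
    refine sub_le_iff_le_add.1 (le_csInf ⟨_, x, y, hx, hy, hxy, rfl⟩ ?_)
    rintro _ ⟨x, y, hx, hy, hxy, rfl⟩
    exact sub_le_iff_le_add.2 ((zetaConv_le hx hy hxy s).trans (h x y hx hy hxy))
  · simpa [zetaConv_eq_zero hpair] using hc

lemma zetaConv_le_zetaConv {s t : ℝ} (hs : 0 ≤ s) (hst : s ≤ t) :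
    zetaConv X s ≤ zetaConv X t := by
  simpa using zetaConv_le_zetaConv_add le_rfl fun x y _ _ (hxy : QuasiOrth (X := X) y x) => by
    simpa using hxy.norm_add_smul_le hs hst

lemma zetaConv_le_add_sub {s t : ℝ} (hst : s ≤ t) :
    zetaConv X t ≤ zetaConv X s + (t - s) := by
  refine zetaConv_le_zetaConv_add (sub_nonneg.2 hst) fun x y _ hy _ => ?_
  calc ‖x + t • y‖ = ‖(x + s • y) + (t - s) • y‖ := by congr 1; module
    _ ≤ ‖x + s • y‖ + ‖(t - s) • y‖ := norm_add_le _ _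
    _ = ‖x + s • y‖ + (t - s) := by rw [norm_smul_of_nonneg (sub_nonneg.2 hst), hy, mul_one]

lemma QuasiOrth.norm_mul_zetaConv_le {x y : X} (h : QuasiOrth y x) :
    ‖x‖ * zetaConv X (‖y‖ / ‖x‖) ≤ ‖x + y‖ := by
  rcases eq_or_ne x 0 with rfl | hx
  · simp
  rcases eq_or_ne y 0 with rfl | hy
  · simpa using mul_le_of_le_one_right (norm_nonneg x) (zetaConv_zero_le_one (X := X))
  have hx' := norm_ne_zero_iff.2 hx
  have hy' := norm_ne_zero_iff.2 hy
  have hunit := zetaConv_le (norm_smul_inv_norm (𝕜 := ℝ) hx) (norm_smul_inv_norm (𝕜 := ℝ) hy)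
    ((h.smul_left _).smul_right (by simp)) (‖y‖ / ‖x‖)
  calc ‖x‖ * zetaConv X (‖y‖ / ‖x‖)
      ≤ ‖x‖ * ‖(‖x‖⁻¹ : ℝ) • x + (‖y‖ / ‖x‖) • (‖y‖⁻¹ : ℝ) • y‖ :=
        mul_le_mul_of_nonneg_left hunit (norm_nonneg x)
    _ = ‖‖x‖ • ((‖x‖⁻¹ : ℝ) • x + (‖y‖ / ‖x‖) • (‖y‖⁻¹ : ℝ) • y)‖ := by
        rw [norm_smul, norm_norm]
    _ = ‖x + y‖ := by
        congr 1
        match_scalars <;> field_simp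

/-- Scaling `z` down into the hyperplane `f = f x` splits `z - x` into a part quasi-orthogonal to
`x` and a multiple of `z`; the Lipschitz bound for `ζ` absorbs the latter. -/
lemma norm_mul_zetaConv_dist_le {f : X →L[ℝ] ℝ} (hf : f ≠ 0) {x z : X} (hfx : f x = ‖f‖ * ‖x‖)
    (hfz : f x ≤ f z) : ‖x‖ * zetaConv X (dist z x / ‖x‖) ≤ ‖z‖ := by
  rcases eq_or_ne x 0 with rfl | hx
  · simp
  have hx0 : 0 < ‖x‖ := norm_pos_iff.2 hx
  have hfx0 : 0 < f x := hfx ▸ mul_pos (norm_pos_iff.2 hf) hx0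
  have hfz0 : 0 < f z := hfx0.trans_le hfz
  set c := f x / f z
  have hc0 : 0 ≤ c := by positivity
  have hc1 : c ≤ 1 := (div_le_one hfz0).2 hfz
  have hqx : QuasiOrth (c • z - x) x :=
    ⟨f, hf, hfx, by rw [map_sub, map_smul, smul_eq_mul, div_mul_cancel₀ _ hfz0.ne', sub_self]⟩
  have hq : ‖x‖ * zetaConv X (dist (c • z) x / ‖x‖) ≤ c * ‖z‖ := by
    simpa [dist_eq_norm, norm_smul_of_nonneg hc0] using hqx.norm_mul_zetaConv_le
  rcases le_total (dist z x) (dist (c • z) x) with hle | hle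
  · calc ‖x‖ * zetaConv X (dist z x / ‖x‖) ≤ ‖x‖ * zetaConv X (dist (c • z) x / ‖x‖) := by
          gcongr
          exact zetaConv_le_zetaConv (by positivity) (by gcongr)
      _ ≤ ‖z‖ := hq.trans (mul_le_of_le_one_left (norm_nonneg z) hc1)
  · have hdist : dist z x - dist (c • z) x ≤ (1 - c) * ‖z‖ := by
      rw [← norm_smul_of_nonneg (sub_nonneg.2 hc1), sub_smul, one_smul, ← dist_eq_norm,
        sub_le_iff_le_add]
      exact dist_triangle _ _ _
    calc ‖x‖ * zetaConv X (dist z x / ‖x‖)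
        ≤ ‖x‖ * (zetaConv X (dist (c • z) x / ‖x‖) +
            (dist z x / ‖x‖ - dist (c • z) x / ‖x‖)) := by
          gcongr
          exact zetaConv_le_add_sub (by gcongr)
      _ = ‖x‖ * zetaConv X (dist (c • z) x / ‖x‖) + (dist z x - dist (c • z) x) := by
          field_simp
      _ ≤ c * ‖z‖ + (1 - c) * ‖z‖ := add_le_add hq hdist
      _ = ‖z‖ := by ring

end QuasiOrthogonality

section MinimalNorm

variable {X : Type*} [NormedAddCommGroup X] [NormedSpace ℝ X]

/-- Every nonempty closed convex subset of `X` contains a point of minimal norm. Reflexive Banach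
spaces have this property; here it stands in for uniform convexity in the general form of the
theorem. -/
def HasMinNormPoints (X : Type*) [NormedAddCommGroup X] [NormedSpace ℝ X] : Prop :=
  ∀ C : Set X, Convex ℝ C → IsClosed C → C.Nonempty → ∃ x ∈ C, IsMinOn norm C x

lemma opNorm_mul_le_of_forall_mem_ball {f : X →L[ℝ] ℝ} {R s : ℝ} (hR : 0 < R)
    (h : ∀ v ∈ Metric.ball (0 : X) R, f v ≤ s) : ‖f‖ * R ≤ s := by
  by_contra! hlt
  obtain ⟨v, hv, hfv⟩ := f.exists_lt_apply_of_lt_opNorm ((div_lt_iff₀ hR).2 hlt)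
  have hball (w : X) (hw : ‖w‖ < 1) : f w ≤ s / R := by
    have hRw : R • w ∈ Metric.ball (0 : X) R := by
      rw [mem_ball_zero_iff, norm_smul_of_nonneg hR.le]
      exact mul_lt_of_lt_one_right hR hw
    rw [le_div_iff₀' hR]
    simpa using h _ hRw
  have habs : ‖f v‖ ≤ s / R := abs_le'.2 ⟨hball v hv, by simpa using hball (-v) (by simpa)⟩
  exact hfv.not_ge habs

lemma exists_support_functional {C : Set X} (hC : Convex ℝ C) {x : X} (hxC : x ∈ C)
    (hmin : IsMinOn norm C x) (hx : x ≠ 0) :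
    ∃ f : X →L[ℝ] ℝ, f ≠ 0 ∧ f x = ‖f‖ * ‖x‖ ∧ ∀ z ∈ C, f x ≤ f z := by
  have hx0 : 0 < ‖x‖ := norm_pos_iff.2 hx
  have hdisj : Disjoint (Metric.ball 0 ‖x‖) C := Set.disjoint_left.2 fun y hy hyC =>
    (mem_ball_zero_iff.1 hy).not_ge (isMinOn_iff.1 hmin y hyC)
  obtain ⟨f, s, hball, hs⟩ :=
    geometric_hahn_banach_open (convex_ball 0 ‖x‖) Metric.isOpen_ball hC hdisj
  have hnorm : ‖f‖ * ‖x‖ ≤ s := opNorm_mul_le_of_forall_mem_ball hx0 fun v hv => (hball v hv).le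
  have hle : f x ≤ ‖f‖ * ‖x‖ := (le_abs_self _).trans (f.le_opNorm x)
  refine ⟨f, ?_, hle.antisymm (hnorm.trans (hs x hxC)), fun z hz =>
    hle.trans (hnorm.trans (hs z hz))⟩
  rintro rfl
  simpa using (hball 0 (Metric.mem_ball_self hx0)).trans_le (hs x hxC)

lemma norm_mul_zetaConv_dist_le_of_isMinOn {C : Set X} (hC : Convex ℝ C) {x z : X} (hxC : x ∈ C)
    (hmin : IsMinOn norm C x) (hzC : z ∈ C) : ‖x‖ * zetaConv X (dist z x / ‖x‖) ≤ ‖z‖ := by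
  rcases eq_or_ne x 0 with rfl | hx
  · simp
  obtain ⟨f, hf, hfx, hfC⟩ := exists_support_functional hC hxC hmin hx
  exact norm_mul_zetaConv_dist_le hf hfx (hfC z hzC)

lemma UnifConvex.uniformConvexSpace (hX : UnifConvex X) : UniformConvexSpace X := by
  refine ⟨fun ε hε => ⟨2 * modConv X (min ε 2), ?_, fun x hx y hy hxy => ?_⟩⟩
  · exact mul_pos two_pos (hX _ ⟨lt_min hε two_pos, min_le_right _ _⟩)
  · have hle : modConv X (min ε 2) ≤ 1 - ‖x + y‖ / 2 := by
      refine csInf_le ⟨0, ?_⟩ ⟨x, y, hx.le, hy.le, (min_le_left _ _).trans hxy, rfl⟩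
      rintro _ ⟨x, y, hx, hy, -, rfl⟩
      linarith [norm_add_le x y]
    linarith

lemma exists_lt_forall_norm_sub_lt [UniformConvexSpace X] {d ε : ℝ} (hd : 0 < d) (hε : 0 < ε) :
    ∃ R > d, ∀ a b : X, ‖a‖ ≤ R → ‖b‖ ≤ R → 2 * d ≤ ‖a + b‖ → ‖a - b‖ < ε := by
  obtain ⟨δ, hδ, hball⟩ :=
    exists_forall_closed_ball_dist_add_le_two_sub X (div_pos hε (mul_pos two_pos hd))
  have hlim : ∀ᶠ R in nhdsWithin d (Set.Ioi d), (2 - δ) * R < 2 * d ∧ R < 2 * d := by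
    have hcont : Continuous fun R : ℝ => (2 - δ) * R := by fun_prop
    have hδd : (2 - δ) * d < 2 * d := by gcongr; linarith
    exact (((hcont.tendsto d).eventually_lt_const hδd).and
      (eventually_lt_nhds (by linarith))).filter_mono nhdsWithin_le_nhds
  obtain ⟨R, ⟨hRδ, hR2⟩, hdR⟩ := (hlim.and self_mem_nhdsWithin).exists
  have hR : 0 < R := hd.trans hdR
  have hnorm (v : X) : ‖R⁻¹ • v‖ = ‖v‖ / R := by
    rw [norm_smul_of_nonneg (inv_nonneg.2 hR.le), inv_mul_eq_div]
  refine ⟨R, hdR, fun a b ha hb hab => ?_⟩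
  by_contra! hlt
  have hsum : ‖a + b‖ / R ≤ 2 - δ := by
    rw [← hnorm, smul_add]
    refine hball ?_ ?_ ?_
    · rwa [hnorm, div_le_one hR]
    · rwa [hnorm, div_le_one hR]
    · rw [← smul_sub, hnorm]
      gcongr
  rw [div_le_iff₀ hR] at hsum
  linarith

lemma cauchySeq_of_tendsto_norm_of_convex [UniformConvexSpace X] {C : Set X} (hC : Convex ℝ C)
    {d : ℝ} (hd : 0 < d) (hdC : ∀ y ∈ C, d ≤ ‖y‖) {u : ℕ → X} (huC : ∀ m, u m ∈ C)
    (hu : Filter.Tendsto (fun m => ‖u m‖) Filter.atTop (nhds d)) : CauchySeq u := by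
  refine Metric.cauchySeq_iff.2 fun ε hε => ?_
  obtain ⟨R, hdR, hR⟩ := exists_lt_forall_norm_sub_lt (X := X) hd hε
  obtain ⟨N, hN⟩ := Filter.eventually_atTop.1 (hu.eventually_le_const hdR)
  refine ⟨N, fun m hm l hl => ?_⟩
  have hmid := hdC _ (hC (huC m) (huC l) (a := 1 / 2) (b := 1 / 2) (by norm_num) (by norm_num)
    (by norm_num))
  rw [← smul_add, norm_smul_of_nonneg (by norm_num)] at hmid
  rw [dist_eq_norm]
  exact hR _ _ (hN m hm) (hN l hl) (by linarith)

lemma hasMinNormPoints_of_uniformConvexSpace [UniformConvexSpace X] [CompleteSpace X] :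
    HasMinNormPoints X := by
  intro C hC hclosed hne
  by_cases h0 : (0 : X) ∈ C
  · exact ⟨0, h0, fun y _ => by simp⟩
  set d := Metric.infDist 0 C
  have hd : 0 < d := (hclosed.notMem_iff_infDist_pos hne).1 h0
  have hdC : ∀ y ∈ C, d ≤ ‖y‖ := fun y hy => by
    simpa using Metric.infDist_le_dist_of_mem (x := (0 : X)) hy
  have happrox (m : ℕ) : ∃ u ∈ C, ‖u‖ < d + 1 / ((m : ℝ) + 1) := by
    simpa using (Metric.infDist_lt_iff hne).1
      (lt_add_of_pos_right d (Nat.one_div_pos_of_nat (n := m)))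
  choose u huC hud using happrox
  have hu : Filter.Tendsto (fun m => ‖u m‖) Filter.atTop (nhds d) := by
    refine tendsto_of_tendsto_of_tendsto_of_le_of_le tendsto_const_nhds ?_
      (fun m => hdC _ (huC m)) fun m => (hud m).le
    simpa using tendsto_one_div_add_atTop_nhds_zero_nat.const_add d
  obtain ⟨x, hx⟩ := cauchySeq_tendsto_of_complete
    (cauchySeq_of_tendsto_norm_of_convex hC hd hdC huC hu)
  refine ⟨x, hclosed.mem_of_tendsto hx (.of_forall huC), fun y hy => ?_⟩
  exact (tendsto_nhds_unique hx.norm hu).trans_le (hdC y hy)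

end MinimalNorm

section HellySequence

variable {X : Type*} [NormedAddCommGroup X] [NormedSpace ℝ X] {r : ℕ → ℝ} {j : ℕ}

lemma IsHellySeq.pos (hr : IsHellySeq X r) (hj : 1 ≤ j) : 0 < r j := (hr.1 j hj).1

lemma IsHellySeq.one_le_zetaConv (hr : IsHellySeq X r) (ε : ℝ) : 1 ≤ zetaConv X ε := by
  refine one_le_zetaConv_of_ne_zero (δ := r 2) (fun h => ?_) ε
  have hrec := hr.2.2 1 le_rfl
  rw [hr.2.1, h, mul_zero] at hrec
  exact zero_ne_one hrec

lemma IsHellySeq.succ_le (hr : IsHellySeq X r) (hj : 1 ≤ j) : r (j + 1) ≤ r j :=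
  hr.2.2 j hj ▸ le_mul_of_one_le_right (hr.pos (by lia)).le (hr.one_le_zetaConv _)

-- Comparing `ζ` at `s = r j` and at the smaller `t = ρ / a` by the Lipschitz bound gives
-- `t * ζ s < s * ζ t`; the recursion supplies `r j ≤ r (j + 1) * ζ s`.
lemma IsHellySeq.div_succ_lt_mul_zetaConv (hr : IsHellySeq X r) (hj : 1 ≤ j) {ρ a : ℝ}
    (hρ : 0 < ρ) (ha : ρ / r j < a) : ρ / r (j + 1) < a * zetaConv X (ρ / a) := by
  have hrj : 0 < r j := hr.pos hj
  have hrj' : 0 < r (j + 1) := hr.pos (by lia)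
  have ha0 : 0 < a := (div_pos hρ hrj).trans ha
  have ht0 : 0 < ρ / a := div_pos hρ ha0
  have hts : ρ / a < r j := (div_lt_comm₀ hrj ha0).1 ha
  have hrec : r j ≤ r (j + 1) * zetaConv X (r j) := by
    calc r j = r (j + 1) * zetaConv X (r (j + 1)) := (hr.2.2 j hj).symm
      _ ≤ r (j + 1) * zetaConv X (r j) := by
        gcongr
        exact zetaConv_le_zetaConv hrj'.le (hr.succ_le hj)
  have hratio : ρ / a * zetaConv X (r j) < r j * zetaConv X (ρ / a) := by
    nlinarith [zetaConv_le_add_sub (X := X) hts.le, hr.one_le_zetaConv (ρ / a), (hr.1 j hj).2]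
  rw [div_lt_iff₀ hrj']
  refine lt_of_mul_lt_mul_right ?_ hrj.le
  calc ρ * r j ≤ ρ * (r (j + 1) * zetaConv X (r j)) := by gcongr
    _ = a * r (j + 1) * (ρ / a * zetaConv X (r j)) := by field_simp
    _ < a * r (j + 1) * (r j * zetaConv X (ρ / a)) := by gcongr
    _ = a * zetaConv X (ρ / a) * r (j + 1) * r j := by ring

lemma IsHellySeq.div_succ_lt_norm (hr : IsHellySeq X r) (hj : 1 ≤ j) {C : Set X}
    (hC : Convex ℝ C) {x z : X} (hxC : x ∈ C) (hmin : IsMinOn norm C x) (hzC : z ∈ C) {ρ : ℝ}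
    (hρ : 0 < ρ) (hx : ρ / r j < ‖x‖) (hzx : ρ ≤ dist z x) : ρ / r (j + 1) < ‖z‖ := by
  have hρx : 0 ≤ ρ / ‖x‖ := by positivity
  calc ρ / r (j + 1) < ‖x‖ * zetaConv X (ρ / ‖x‖) := hr.div_succ_lt_mul_zetaConv hj hρ hx
    _ ≤ ‖x‖ * zetaConv X (dist z x / ‖x‖) := by
      gcongr
      exact zetaConv_le_zetaConv hρx (by gcongr)
    _ ≤ ‖z‖ := norm_mul_zetaConv_dist_le_of_isMinOn hC hxC hmin hzC

end HellySequence

section GreedyCounting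

open Finset

variable {ι : Type*} [Fintype ι] [DecidableEq ι] {P : Finset ι → Prop} [DecidablePred P] {γ : ℝ}

lemma card_filter_powersetCard_mul_le {j : ℕ}
    (hstep : ∀ S : Finset ι, #S = j → P S → γ * #Sᶜ ≤ #{i ∈ Sᶜ | P (insert i S)}) :
    #{S ∈ univ.powersetCard j | P S} * (γ * (Fintype.card ι - j : ℕ)) ≤
      #{T ∈ univ.powersetCard (j + 1) | P T} * ((j : ℝ) + 1) := by
  rw [← nsmul_eq_mul, ← nsmul_eq_mul]
  refine card_nsmul_le_card_nsmul (· ⊆ ·) (fun S hS => ?_) fun T hT => ?_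
  · obtain ⟨hSj, hPS⟩ : #S = j ∧ P S := by simpa using hS
    rw [← hSj, ← card_compl]
    refine (hstep S hSj hPS).trans (Nat.cast_le.2 ?_)
    refine card_le_card_of_injOn (insert · S) (fun i hi => ?_) fun i hi l _ h => ?_
    · obtain ⟨hiS, hPi⟩ : i ∉ S ∧ P (insert i S) := by simpa using hi
      simp [card_insert_of_notMem hiS, hSj, hPi]
    · simp only [coe_filter, mem_compl, Set.mem_ofPred_eq] at hi
      exact (insert_inj hi.1).1 h
  · have hTj : #T = j + 1 := by simpa using (mem_filter.1 hT).1
    have hsub : bipartiteBelow (· ⊆ ·) {S ∈ univ.powersetCard j | P S} T ⊆ T.powersetCard j :=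
      fun S hS => by
        simp only [mem_bipartiteBelow, mem_filter, mem_powersetCard_univ] at hS
        exact mem_powersetCard.2 ⟨hS.2, hS.1.1⟩
    have hcard := card_le_card hsub
    rw [card_powersetCard, hTj, Nat.choose_succ_self_right] at hcard
    exact_mod_cast hcard

lemma pow_mul_choose_le_card_filter_powersetCard (hγ : 0 ≤ γ) (hempty : P ∅) (k : ℕ)
    (hstep : ∀ S : Finset ι, #S < k → P S → γ * #Sᶜ ≤ #{i ∈ Sᶜ | P (insert i S)}) :
    γ ^ k * (Fintype.card ι).choose k ≤ #{S ∈ univ.powersetCard k | P S} := by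
  induction k with
  | zero => simp [filter_singleton, hempty]
  | succ k ih =>
    have hchoose : ((Fintype.card ι).choose (k + 1) : ℝ) * (k + 1) =
        (Fintype.card ι).choose k * (Fintype.card ι - k : ℕ) := by
      exact_mod_cast Nat.choose_succ_right_eq _ _
    refine le_of_mul_le_mul_right ?_ (Nat.cast_add_one_pos k)
    calc γ ^ (k + 1) * (Fintype.card ι).choose (k + 1) * (k + 1)
        = γ ^ k * (Fintype.card ι).choose k * (γ * (Fintype.card ι - k : ℕ)) := by
          rw [mul_assoc, hchoose]
          ring
      _ ≤ #{S ∈ univ.powersetCard k | P S} * (γ * (Fintype.card ι - k : ℕ)) := by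
          gcongr
          exact ih fun S hS => hstep S (by lia)
      _ ≤ #{S ∈ univ.powersetCard (k + 1) | P S} * ((k : ℝ) + 1) :=
          card_filter_powersetCard_mul_le fun S hS => hstep S (by lia)

end GreedyCounting

section FractionalHelly

open Finset Metric

variable {X : Type*} [NormedAddCommGroup X] [NormedSpace ℝ X] {ι : Type*} {r : ℕ → ℝ} {ρ γ : ℝ}
  {K : ι → Set X}

/-- The invariant of the greedy construction: the sets `K i`, `i ∈ S`, meet only outside the ball of
radius `ρ / r #S`. The empty set of indices is admitted as the starting point, since `r 0` carries
no information. -/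
def IsRemote (r : ℕ → ℝ) (ρ : ℝ) (K : ι → Set X) (S : Finset ι) : Prop :=
  S.Nonempty → ∀ p ∈ ⋂ i ∈ S, K i, ρ / r #S < ‖p‖

lemma IsRemote.insert_of_notMem_cthickening (hr : IsHellySeq X r) (hρ : 0 < ρ)
    (hconv : ∀ i, Convex ℝ (K i)) {S : Finset ι} (hS : IsRemote r ρ K S) {x : X}
    (hx : x ∈ ⋂ i ∈ S, K i) (hmin : IsMinOn norm (⋂ i ∈ S, K i) x) {i : ι} (hiS : i ∉ S)
    (hxi : x ∉ cthickening ρ (K i)) : IsRemote r ρ K (insert i S) := by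
  intro _ z hz
  obtain ⟨hzi, hzS⟩ : z ∈ K i ∧ z ∈ ⋂ i ∈ S, K i := by simpa using hz
  have hzx : ρ < dist z x := by
    contrapose! hxi
    exact mem_cthickening_of_dist_le x z ρ (K i) hzi (by rwa [dist_comm])
  rw [card_insert_of_notMem hiS]
  rcases S.eq_empty_or_nonempty with rfl | hne
  · obtain rfl : x = 0 := by simpa using isMinOn_iff.1 hmin 0 (by simp)
    simpa [hr.2.1] using hzx
  · exact hr.div_succ_lt_norm hne.card_pos (convex_iInter₂ fun i _ => hconv i) hx hmin hzS hρ
      (hS hne x hx) hzx.le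

variable [Fintype ι]

lemma IsRemote.mul_card_compl_le (hX : HasMinNormPoints X) (hr : IsHellySeq X r) (hρ : 0 < ρ)
    (hconv : ∀ i, Convex ℝ (K i)) (hclosed : ∀ i, IsClosed (K i)) (hγ : γ ∈ Set.Icc (0 : ℝ) 1)
    (hfar : ∀ x : X, γ * Fintype.card ι ≤ #{i | x ∉ cthickening ρ (K i)}) {S : Finset ι}
    (hS : IsRemote r ρ K S) : γ * #Sᶜ ≤ #{i ∈ Sᶜ | IsRemote r ρ K (insert i S)} := by
  rcases (⋂ i ∈ S, K i).eq_empty_or_nonempty with hempty | hne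
  · have hall : {i ∈ Sᶜ | IsRemote r ρ K (insert i S)} = Sᶜ :=
      filter_true_of_mem fun i _ _ p hp => by
        have hpS : p ∈ ⋂ i ∈ S, K i := Set.biInter_subset_biInter_left (subset_insert i S) hp
        simp [hempty] at hpS
    rw [hall]
    exact mul_le_of_le_one_left (Nat.cast_nonneg _) hγ.2
  · obtain ⟨x, hx, hmin⟩ := hX _ (convex_iInter₂ fun i _ => hconv i)
      (isClosed_biInter fun i _ => hclosed i) hne
    calc γ * #Sᶜ ≤ γ * Fintype.card ι :=
          mul_le_mul_of_nonneg_left (Nat.cast_le.2 (card_le_univ _)) hγ.1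
      _ ≤ #{i | x ∉ cthickening ρ (K i)} := hfar x
      _ ≤ #{i ∈ Sᶜ | IsRemote r ρ K (insert i S)} := by
          refine Nat.cast_le.2 (card_le_card fun i hi => ?_)
          have hxi : x ∉ cthickening ρ (K i) := (mem_filter.1 hi).2
          have hiS : i ∉ S := fun h =>
            hxi (self_subset_cthickening (K i) (Set.mem_iInter₂.1 hx i h))
          exact mem_filter.2 ⟨mem_compl.2 hiS,
            hS.insert_of_notMem_cthickening hr hρ hconv hx hmin hiS hxi⟩

lemma pow_mul_choose_le_card_not_meets_closedBall (hX : HasMinNormPoints X) (hr : IsHellySeq X r)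
    {k : ℕ} (hk : 1 ≤ k) (hconv : ∀ i, Convex ℝ (K i)) (hγ : γ ∈ Set.Icc (0 : ℝ) 1)
    (hfar : ∀ x : X, γ * Fintype.card ι ≤ #{i | x ∉ cthickening (r k) (K i)}) :
    γ ^ k * (Fintype.card ι).choose k ≤
      #{J ∈ univ.powersetCard k | ¬∃ p ∈ closedBall (0 : X) 1, ∀ j ∈ J, p ∈ K j} := by
  have hcount : γ ^ k * (Fintype.card ι).choose k ≤
      #{J ∈ univ.powersetCard k | IsRemote r (r k) (fun i => closure (K i)) J} :=
    pow_mul_choose_le_card_filter_powersetCard hγ.1 (by simp [IsRemote]) k fun S _ hS =>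
      IsRemote.mul_card_compl_le hX hr (hr.pos hk) (fun i => (hconv i).closure)
        (fun i => isClosed_closure) hγ (by simpa only [cthickening_closure] using hfar) hS
  refine hcount.trans (Nat.cast_le.2 (card_le_card fun J hJ => ?_))
  obtain ⟨hJk, hremote⟩ := mem_filter.1 hJ
  have hcard : #J = k := mem_powersetCard_univ.1 hJk
  refine mem_filter.2 ⟨hJk, fun ⟨p, hp, hpK⟩ => ?_⟩
  have hlt := hremote (card_pos.1 (by lia)) p
    (Set.mem_iInter₂.2 fun j hj => subset_closure (hpK j hj))
  rw [hcard, div_self (hr.pos hk).ne'] at hlt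
  exact hlt.not_ge (mem_closedBall_zero_iff.1 hp)

lemma le_one_sub_rpow_of_forall_notMem_cthickening (hX : HasMinNormPoints X)
    (hr : IsHellySeq X r) {k : ℕ} (hk : 1 ≤ k) (hkι : k ≤ Fintype.card ι) {α : ℝ} (hα : α ≤ 1)
    (hconv : ∀ i, Convex ℝ (K i))
    (hfrac : α * (Fintype.card ι).choose k ≤
      #{J ∈ univ.powersetCard k | ∃ p ∈ closedBall (0 : X) 1, ∀ j ∈ J, p ∈ K j})
    (hγ : γ ∈ Set.Icc (0 : ℝ) 1)
    (hfar : ∀ x : X, γ * Fintype.card ι ≤ #{i | x ∉ cthickening (r k) (K i)}) :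
    γ ≤ (1 - α) ^ ((1 : ℝ) / k) := by
  have hmiss := pow_mul_choose_le_card_not_meets_closedBall hX hr hk hconv hγ hfar
  have htotal : (#{J ∈ univ.powersetCard k | ∃ p ∈ closedBall (0 : X) 1, ∀ j ∈ J, p ∈ K j} : ℝ) +
      #{J ∈ univ.powersetCard k | ¬∃ p ∈ closedBall (0 : X) 1, ∀ j ∈ J, p ∈ K j} =
      (Fintype.card ι).choose k := by
    rw [← card_univ, ← card_powersetCard]
    exact_mod_cast card_filter_add_card_filter_not _
  have hpow : γ ^ k ≤ 1 - α :=
    le_of_mul_le_mul_right (by linarith) (Nat.cast_pos.2 (Nat.choose_pos hkι))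
  rwa [one_div, Real.le_rpow_inv_iff_of_pos hγ.1 (sub_nonneg.2 hα) (Nat.cast_pos.2 hk),
    Real.rpow_natCast]

/-- The theorem in any space where closed convex sets have points of minimal norm. A closed
thickening of the empty set is empty, whereas `infDist x ∅ = 0`, so empty sets `K i` do not count
towards the conclusion here. -/
theorem no_dim_fractional_helly_general (hX : HasMinNormPoints X) (hr : IsHellySeq X r)
    {k : ℕ} (hk : 1 ≤ k) (hkι : k ≤ Fintype.card ι) {α : ℝ} (hα : α ≤ 1)
    (hconv : ∀ i, Convex ℝ (K i))
    (hfrac : α * (Fintype.card ι).choose k ≤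
      #{J ∈ univ.powersetCard k | ∃ p ∈ closedBall (0 : X) 1, ∀ j ∈ J, p ∈ K j}) :
    ∃ x : X, (1 - (1 - α) ^ ((1 : ℝ) / k)) * Fintype.card ι ≤
      #{i | x ∈ cthickening (r k) (K i)} := by
  obtain ⟨_, ⟨x, rfl⟩, hx⟩ := Set.exists_min_image
    (Set.range fun x : X => ({i | x ∉ cthickening (r k) (K i)} : Finset ι)) card
    (Set.toFinite _) (Set.range_nonempty _)
  have hsplit : (#{i | x ∈ cthickening (r k) (K i)} : ℝ) +
      #{i | x ∉ cthickening (r k) (K i)} = Fintype.card ι := by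
    exact_mod_cast card_filter_add_card_filter_not (s := univ)
      fun i => x ∈ cthickening (r k) (K i)
  have hn : (0 : ℝ) < Fintype.card ι := Nat.cast_pos.2 (by lia)
  set γ : ℝ := #{i | x ∉ cthickening (r k) (K i)} / Fintype.card ι
  have hγn : γ * Fintype.card ι = #{i | x ∉ cthickening (r k) (K i)} := div_mul_cancel₀ _ hn.ne'
  have hγ : γ ∈ Set.Icc (0 : ℝ) 1 :=
    ⟨by positivity, div_le_one_of_le₀ (Nat.cast_le.2 (card_le_univ _)) hn.le⟩
  have hγα : γ ≤ (1 - α) ^ ((1 : ℝ) / k) :=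
    le_one_sub_rpow_of_forall_notMem_cthickening hX hr hk hkι hα hconv hfrac hγ fun y =>
      hγn.trans_le (Nat.cast_le.2 (hx _ ⟨y, rfl⟩))
  refine ⟨x, ?_⟩
  calc (1 - (1 - α) ^ ((1 : ℝ) / k)) * Fintype.card ι ≤ (1 - γ) * Fintype.card ι := by gcongr
    _ = #{i | x ∈ cthickening (r k) (K i)} := by linarith

end FractionalHelly

/-- **No-dimensional fractional Helly theorem in uniformly convex Banach spaces.** -/
theorem no_dim_fractional_helly
    {X : Type*} [NormedAddCommGroup X] [NormedSpace ℝ X] [CompleteSpace X]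
    (hX : UnifConvex X) {r : ℕ → ℝ} (hr : IsHellySeq X r)
    {k n : ℕ} (hk1 : 1 ≤ k) (hkn : k ≤ n)
    {α β : ℝ} (hα : α ∈ Set.Ioc (0 : ℝ) 1) (hβ : β = 1 - (1 - α) ^ ((1 : ℝ) / k))
    (K : Fin n → Set X) (hconv : ∀ i, Convex ℝ (K i))
    (hfrac : α * (n.choose k) ≤
      (((Finset.univ : Finset (Fin n)).powersetCard k).filter
        (fun J => ∃ p ∈ Metric.closedBall (0 : X) 1, ∀ j ∈ J, p ∈ K j)).card) :
    ∃ x : X, β * n ≤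
      ((Finset.univ : Finset (Fin n)).filter
        (fun i => Metric.infDist x (K i) ≤ r k)).card := by
  obtain ⟨x, hx⟩ := no_dim_fractional_helly_general
    (have := hX.uniformConvexSpace; hasMinNormPoints_of_uniformConvexSpace) hr hk1
    (by simpa using hkn) hα.2 hconv (by simpa using hfrac)
  refine ⟨x, ?_⟩
  rw [hβ]
  refine (by simpa using hx : _ ≤ _).trans (Nat.cast_le.2 (Finset.card_le_card fun i hi => ?_))
  simp only [Finset.mem_filter_univ] at hi ⊢
  exact ENNReal.toReal_le_of_le_ofReal (hr.pos hk1).le (Metric.mem_cthickening_iff.1 hi)
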